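/- arXiv:2203.07941 — 2 statements merged into one kernel-verified Lean document; each statement's English description precedes it below -/
import Mathlib

section
/- Let ψ be a 3CNF formula with n propositional variables and m clauses, where clause j consists of three literals ℓ_{j,1}, ℓ_{j,2}, ℓ_{j,3}, each a pair of a variable index i ∈ {1,…,n} and a sign. For x ∈ ℝⁿ let val_{j,k}(x) = x_i if literal ℓ_{j,k} is the positive literal of variable i and val_{j,k}(x) = 1 − x_i if it is the negative literal of variable i. Then there exists x ∈ ℝⁿ such that ReLU(1/2 − x_i) + ReLU(x_i − 1/2) − 1/2 = 0 for every i ∈ {1,…,n} and Σ_{j=1}^{m} (1 − ReLU(1 − val_{j,1}(x) − val_{j,2}(x) − val_{j,3}(x))) = m, if and only if ψ is satisfiable, i.e., there is an assignment α : {1,…,n} → {0,1} such that every clause contains a literal whose variable is assigned 1 if the literal is positive and 0 if it is negative. -/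
/-- The ReLU function. -/
noncomputable def ReLU (x : ℝ) : ℝ := max 0 x

/-- The real value of a literal (a variable index together with a sign, `true`
meaning positive) under a real-valued input `x`: `x i` for the positive
literal of variable `i` and `1 - x i` for the negative one. -/
noncomputable def litVal {n : ℕ} (ℓ : Fin n × Bool) (x : Fin n → ℝ) : ℝ :=
  if ℓ.2 then x ℓ.1 else 1 - x ℓ.1

/-- A boolean assignment satisfies a literal if the variable is assigned `true`
(i.e. 1) when the literal is positive and `false` (i.e. 0) when it is negative. -/
def litSat {n : ℕ} (ℓ : Fin n × Bool) (α : Fin n → Bool) : Prop :=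
  α ℓ.1 = ℓ.2

/-- The boolean gadget vanishes exactly on the two boolean values. -/
theorem bool_gadget_eq_zero_iff (t : ℝ) :
    ReLU (1/2 - t) + ReLU (t - 1/2) - 1/2 = 0 ↔ t = 0 ∨ t = 1 := by
  unfold ReLU
  constructor
  · intro h
    rcases le_total t (1/2) with ht | ht
    · rw [max_eq_right (by linarith), max_eq_left (by linarith)] at h
      left; linarith
    · rw [max_eq_left (by linarith), max_eq_right (by linarith)] at h
      right; linarith
  · rintro (rfl | rfl) <;> norm_num

/-- On the real encoding of an assignment, a literal has value `1` if satisfied and `0` if not. -/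
theorem litVal_encode {n : ℕ} (ℓ : Fin n × Bool) (α : Fin n → Bool) :
    litVal ℓ (fun i => if α i then 1 else 0) = if α ℓ.1 = ℓ.2 then 1 else 0 := by
  obtain ⟨i, b⟩ := ℓ
  cases b <;> cases h : α i <;> simp [litVal, h]

/-- The clause gadget never exceeds `1`, so the and-gadget attains `m` iff every clause does. -/
theorem and_gadget_eq_iff {m : ℕ} (f : Fin m → ℝ) :
    ∑ j, (1 - ReLU (f j)) = m ↔ ∀ j, f j ≤ 0 := by
  have hsum : ∑ j, (1 - ReLU (f j)) = m - ∑ j, ReLU (f j) := by simp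
  rw [hsum, sub_eq_self, Finset.sum_eq_zero_iff_of_nonneg fun j _ =>
    show 0 ≤ ReLU (f j) from le_max_left 0 (f j)]
  simp [ReLU]

/-- On the real encoding of an assignment, the clause condition says some literal is satisfied. -/
theorem clause_encode_iff {n : ℕ} (c : Fin 3 → Fin n × Bool) (α : Fin n → Bool) :
    1 - litVal (c 0) (fun i => if α i then 1 else 0)
      - litVal (c 1) (fun i => if α i then 1 else 0)
      - litVal (c 2) (fun i => if α i then 1 else 0) ≤ 0 ↔ ∃ k, litSat (c k) α := by
  simp only [litVal_encode, Fin.exists_fin_succ, litSat]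
  by_cases h0 : α (c 0).1 = (c 0).2 <;> by_cases h1 : α (c 1).1 = (c 1).2 <;>
    by_cases h2 : α (c 2).1 = (c 2).2 <;> simp [h0, h1, h2]

theorem stmt_4 (n m : ℕ) (lit : Fin m → Fin 3 → Fin n × Bool) :
    (∃ x : Fin n → ℝ,
      (∀ i : Fin n, ReLU (1/2 - x i) + ReLU (x i - 1/2) - 1/2 = 0) ∧
      (∑ j : Fin m,
        (1 - ReLU (1 - litVal (lit j 0) x - litVal (lit j 1) x - litVal (lit j 2) x)))
        = m) ↔
    (∃ α : Fin n → Bool, ∀ j : Fin m, ∃ k : Fin 3, litSat (lit j k) α) := by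
  simp only [bool_gadget_eq_zero_iff, and_gadget_eq_iff]
  constructor
  · rintro ⟨x, hx, hclause⟩
    have henc : x = fun i => if decide (x i = 1) then 1 else 0 := by
      funext i
      rcases hx i with h | h <;> simp [h]
    refine ⟨fun i => decide (x i = 1), fun j => (clause_encode_iff (lit j) _).1 ?_⟩
    rw [← henc]
    exact hclause j
  · rintro ⟨α, hα⟩
    exact ⟨fun i => if α i then 1 else 0, fun i => by cases α i <;> simp,
      fun j => (clause_encode_iff (lit j) α).2 (hα j)⟩
end

section
/- Let c, d be positive rationals and define discrete(x) = d − c·ReLU(−c·x) − c·ReLU(d·x) for x ∈ ℝ. Then for every real r, discrete(r) = 0 if and only if r = −d/c² or r = 1/c. -/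
/-- The discrete-gadget with parameters `c` and `d`. -/
noncomputable def discreteGadget (c d : ℚ) (x : ℝ) : ℝ :=
  (d : ℝ) - (c : ℝ) * ReLU (-(c : ℝ) * x) - (c : ℝ) * ReLU ((d : ℝ) * x)

theorem stmt_10 (c d : ℚ) (hc : 0 < c) (hd : 0 < d) (r : ℝ) :
    discreteGadget c d r = 0 ↔ r = -(d : ℝ) / (c : ℝ)^2 ∨ r = 1 / (c : ℝ) := by
  have hc' : (0 : ℝ) < c := by exact_mod_cast hc
  have hd' : (0 : ℝ) < d := by exact_mod_cast hd
  unfold discreteGadget ReLU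
  generalize (c : ℝ) = a at *
  generalize (d : ℝ) = b at *
  rw [eq_div_iff (by positivity), eq_div_iff hc'.ne']
  rcases le_or_gt 0 r with hr | hr
  · rw [max_eq_left (by nlinarith), max_eq_right (by positivity)]
    constructor
    · intro h
      exact Or.inr (mul_left_cancel₀ hd'.ne' (by linarith))
    · rintro (h | h)
      · nlinarith [mul_nonneg hr (sq_nonneg a)]
      · linear_combination -b * h
  · rw [max_eq_right (by nlinarith), max_eq_left (by nlinarith)]
    constructor
    · intro h
      exact Or.inl (by linarith)
    · rintro (h | h)
      · linear_combination h
      · nlinarith [mul_pos_of_neg_of_neg hr (neg_lt_zero.mpr hc')]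
end
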